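/- Let n ≥ 1, let λ = (λ_1,…,λ_ℓ) be a partition of n, and let N ≥ 1 be a number of variables. Then, as an identity of symmetric polynomials in N variables with rational coefficients, (1/n!) · Σ_{π ∈ S_n} d_λ(π) · p_{λ(π)} = h_λ, where h_λ = Π_{i=1}^ℓ h_{λ_i}. -/

import Mathlib

/-- `dPart λ π` is the number of ordered tuples `(A_1, …, A_l)` of pairwise disjoint
subsets of `{0, …, n-1}` with union everything, `|A_i| = λ_i`, and each `A_i`
invariant under the permutation `π`. -/
noncomputable def dPart {n l : ℕ} (lam : Fin l → ℕ) (π : Equiv.Perm (Fin n)) : ℕ :=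
  Nat.card {A : Fin l → Finset (Fin n) //
    (∀ i j, i ≠ j → Disjoint (A i) (A j)) ∧
    (Finset.univ.biUnion A = Finset.univ) ∧
    (∀ i, (A i).card = lam i) ∧
    (∀ i, (A i).image π = A i)}

/-- `pPerm N π = p_{λ(π)}`, the product of the power sum polynomials `p_k` in `N`
variables over the cycle lengths `k` (including fixed points) of the permutation `π`. -/
noncomputable def pPerm (N : ℕ) {n : ℕ} (π : Equiv.Perm (Fin n)) :
    MvPolynomial (Fin N) ℚ :=
  ((Equiv.Perm.partition π).parts.map (fun k => MvPolynomial.psum (Fin N) ℚ k)).prod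

open Finset in
lemma aux_parts {M : Type*} [CommMonoid M] {n : ℕ} (π : Equiv.Perm (Fin n)) (F : ℕ → M)
    [Fintype (Quotient (Equiv.Perm.SameCycle.setoid π))]
    [DecidableEq (Quotient (Equiv.Perm.SameCycle.setoid π))] :
    ((Equiv.Perm.partition π).parts.map F).prod =
      ∏ q : Quotient (Equiv.Perm.SameCycle.setoid π),
        F (#{j : Fin n | (Quotient.mk (Equiv.Perm.SameCycle.setoid π) j) = q}) := by
  classical
  have hmk : ∀ a b : Fin n, Quotient.mk (Equiv.Perm.SameCycle.setoid π) a =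
      Quotient.mk (Equiv.Perm.SameCycle.setoid π) b ↔ π.SameCycle a b := by
    intro a b
    exact Quotient.eq (r := Equiv.Perm.SameCycle.setoid π)
  have hout : ∀ q : Quotient (Equiv.Perm.SameCycle.setoid π), ∀ a, q = Quotient.mk _ a →
      π.SameCycle q.out a := by
    intro q a h
    rw [← hmk, ← h]; exact Quotient.out_eq q
  rw [Equiv.Perm.parts_partition, Multiset.map_add, Multiset.prod_add, Equiv.Perm.cycleType_def,
    ← Finset.prod_filter_mul_prod_filter_not univ
      (fun q : Quotient (Equiv.Perm.SameCycle.setoid π) => q.out ∈ π.support)]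
  congr 1
  · rw [Multiset.map_map]
    change ∏ c ∈ π.cycleFactorsFinset, F (#c.support) = _
    symm
    refine Finset.prod_bij (fun q _ => π.cycleOf q.out) ?_ ?_ ?_ ?_
    · intro q hq
      simp only [mem_filter, mem_univ, true_and] at hq
      exact Equiv.Perm.cycleOf_mem_cycleFactorsFinset_iff.2 hq
    · intro q hq q' hq' h
      simp only [mem_filter, mem_univ, true_and] at hq hq'
      rw [← Equiv.Perm.sameCycle_iff_cycleOf_eq_of_mem_support hq hq', ← hmk] at h
      simpa using h
    · intro c hc
      have hcyc := (Equiv.Perm.mem_cycleFactorsFinset_iff.1 hc).1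
      obtain ⟨a, ha⟩ := hcyc.nonempty_support
      have h1 := Equiv.Perm.cycle_is_cycleOf ha hc
      have h2 := hout (Quotient.mk _ a) a rfl
      refine ⟨Quotient.mk _ a, ?_, ?_⟩
      · simp only [mem_filter, mem_univ, true_and]
        rw [← Equiv.Perm.cycleOf_mem_cycleFactorsFinset_iff, h2.cycleOf_eq, ← h1]
        exact hc
      · rw [h1]; exact h2.cycleOf_eq
    · intro q hq
      simp only [mem_filter, mem_univ, true_and] at hq
      congr 2
      ext j
      rw [Equiv.Perm.mem_support_cycleOf_iff' (Equiv.Perm.mem_support.1 hq)]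
      simp only [mem_filter, mem_univ, true_and]
      rw [← hmk, Quotient.out_eq, eq_comm]
  · rw [Multiset.map_replicate, Multiset.prod_replicate, ← Finset.card_compl,
      ← Finset.prod_const]
    refine Finset.prod_bij (fun a _ => Quotient.mk _ a) ?_ ?_ ?_ ?_
    · intro a ha
      simp only [mem_filter, mem_univ, true_and, mem_compl, Equiv.Perm.mem_support, not_not] at ha ⊢
      have h2 := hout (Quotient.mk _ a) a rfl
      exact h2.apply_eq_self_iff.2 ha
    · intro a ha b hb h
      simp only [mem_compl, Equiv.Perm.mem_support, not_not] at ha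
      rw [hmk] at h
      exact h.eq_of_left ha
    · intro q hq
      simp only [mem_filter, mem_univ, true_and] at hq
      exact ⟨q.out, by simpa using hq, Quotient.out_eq q⟩
    · intro a ha
      simp only [mem_compl, Equiv.Perm.mem_support, not_not] at ha
      congr 1
      symm
      rw [Finset.card_eq_one]
      refine ⟨a, ?_⟩
      ext j
      simp only [mem_filter, mem_univ, true_and, mem_singleton, hmk]
      constructor
      · intro h; exact h.eq_of_right ha
      · rintro rfl; exact Equiv.Perm.SameCycle.refl _ _

open Finset in
lemma aux_polya (N : ℕ) {n : ℕ} (π : Equiv.Perm (Fin n)) :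
    pPerm N π = ∑ f : Fin n → Fin N, if (∀ j, f (π j) = f j) then
      ∏ j, (MvPolynomial.X (f j) : MvPolynomial (Fin N) ℚ) else 0 := by
  classical
  rw [pPerm, aux_parts]
  simp only [MvPolynomial.psum]
  rw [Finset.prod_univ_sum, ← Finset.sum_filter]
  simp only [Fintype.piFinset_univ]
  refine Finset.sum_bij (fun x _ => fun j => x (Quotient.mk _ j)) ?_ ?_ ?_ ?_
  · intro x _
    simp only [mem_filter, mem_univ, true_and]
    intro j
    congr 1
    refine Quotient.sound (s := Equiv.Perm.SameCycle.setoid π) ?_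
    exact (Equiv.Perm.sameCycle_apply_left.2 (Equiv.Perm.SameCycle.refl _ _))
  · intro x _ y _ h
    funext q
    induction q using Quotient.inductionOn with
    | h j => exact congrFun h j
  · intro f hf
    simp only [mem_filter, mem_univ, true_and] at hf
    have hinv : ∀ a b, π.SameCycle a b → f a = f b := by
      rintro a b hab
      obtain ⟨k, rfl⟩ := hab.exists_nat_pow_eq
      induction k with
      | zero => simp
      | succ k ih =>
        rw [pow_succ', Equiv.Perm.mul_apply, hf]
        exact ih ⟨k, by simp⟩
    exact ⟨fun q => Quotient.lift f hinv q, mem_univ _, rfl⟩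
  · intro x _
    rw [← Finset.prod_fiberwise univ (fun j => Quotient.mk (Equiv.Perm.SameCycle.setoid π) j)]
    refine Finset.prod_congr rfl fun q _ => ?_
    rw [Finset.prod_congr rfl (g := fun _ => MvPolynomial.X (x q)), Finset.prod_const]
    intro j hj
    simp only [mem_filter, mem_univ, true_and] at hj
    exact congrArg (fun q => MvPolynomial.X (x q)) hj

open Finset in
lemma aux_dPart {n l : ℕ} (lam : Fin l → ℕ) (π : Equiv.Perm (Fin n)) :
    dPart lam π = #{g : Fin n → Fin l | (∀ i, #{j | g j = i} = lam i) ∧ ∀ j, g (π j) = g j} := by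
  classical
  rw [← Fintype.card_subtype, ← Nat.card_eq_fintype_card, dPart]
  symm
  refine Nat.card_congr (Equiv.ofBijective
    (fun g => ⟨fun i => ({j | g.1 j = i} : Finset (Fin n)), ?_, ?_, ?_, ?_⟩) ⟨?_, ?_⟩)
  · intro i j hij
    rw [Finset.disjoint_left]
    intro a ha hb
    simp at ha hb
    exact hij (ha.symm.trans hb)
  · ext a; simp
  · exact g.2.1
  · intro i
    ext a
    simp only [mem_image, mem_filter, mem_univ, true_and]
    constructor
    · rintro ⟨b, hb, rfl⟩
      rw [g.2.2, hb]
    · intro h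
      refine ⟨π.symm a, ?_, by simp⟩
      rw [← g.2.2]; simpa using h
  · intro g g' h
    apply Subtype.ext
    funext j
    have h1 := congrFun (congrArg Subtype.val h) (g.1 j)
    have h2 : j ∈ ({k | g.1 k = g.1 j} : Finset (Fin n)) := by simp
    simp only at h1
    rw [h1] at h2
    simp at h2
    exact h2.symm
  · rintro ⟨A, hd, hu, hc, hi⟩
    have hex : ∀ j, ∃ i, j ∈ A i := by
      intro j
      have : j ∈ univ.biUnion A := by rw [hu]; simp
      simpa using this
    choose g hg using hex
    have hgi : ∀ i j, g j = i ↔ j ∈ A i := by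
      intro i j
      constructor
      · rintro rfl; exact hg j
      · intro h
        by_contra hne
        exact Finset.disjoint_left.1 (hd _ _ hne) (hg j) h
    have hA : ∀ i, ({j | g j = i} : Finset (Fin n)) = A i := by
      intro i; ext j; simp [hgi]
    refine ⟨⟨g, ?_, ?_⟩, ?_⟩
    · intro i; rw [hA, hc]
    · intro j
      rw [hgi, ← hi]
      exact mem_image_of_mem _ (hg j)
    · apply Subtype.ext
      funext i
      exact hA i

/-- the colour multiset over each block -/
def auxType {n l N : ℕ} (p : (Fin n → Fin l) × (Fin n → Fin N)) (i : Fin l) :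
    Multiset (Fin N) :=
  (Finset.univ.filter (fun j => p.1 j = i)).val.map p.2

open Finset in
lemma auxType_perm {n l N : ℕ} (p p' : (Fin n → Fin l) × (Fin n → Fin N))
    (h : ∀ i, auxType p i = auxType p' i) :
    ∃ σ : Equiv.Perm (Fin n), ∀ j, p'.1 (σ j) = p.1 j ∧ p'.2 (σ j) = p.2 j := by
  classical
  have key : ∀ (p : (Fin n → Fin l) × (Fin n → Fin N)) (c : Fin l × Fin N),
      Fintype.card {j // (p.1 j, p.2 j) = c} = (auxType p c.1).count c.2 := by
    intro p c
    rw [auxType, Multiset.count_map, Fintype.card_subtype, ← Finset.filter_val, Finset.card_val,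
      Finset.filter_filter]
    congr 1
    ext j
    simp [Prod.ext_iff, eq_comm]
  have e : ∀ c : Fin l × Fin N,
      {j // (p.1 j, p.2 j) = c} ≃ {j // (p'.1 j, p'.2 j) = c} := fun c =>
    Fintype.equivOfCardEq (by rw [key, key, h])
  refine ⟨Equiv.ofFiberEquiv (f := fun j => (p.1 j, p.2 j)) (g := fun j => (p'.1 j, p'.2 j)) e, ?_⟩
  intro j
  have := Equiv.ofFiberEquiv_map (f := fun j => (p.1 j, p.2 j)) (g := fun j => (p'.1 j, p'.2 j)) e j
  simpa [Prod.ext_iff] using this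

open Finset in
lemma auxType_comp {n l N : ℕ} (p : (Fin n → Fin l) × (Fin n → Fin N))
    (σ : Equiv.Perm (Fin n)) (i : Fin l) : auxType (p.1 ∘ σ, p.2 ∘ σ) i = auxType p i := by
  classical
  rw [auxType, auxType]
  simp only [Function.comp_apply]
  have : (Finset.univ.filter (fun j => p.1 j = i)) =
      (Finset.univ.filter (fun j => p.1 (σ j) = i)).map σ.toEmbedding := by
    ext j
    simp only [mem_filter, mem_univ, true_and, mem_map_equiv, Equiv.apply_symm_apply]
  rw [this, Finset.map_val, Multiset.map_map]
  rfl

open Finset in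
lemma auxType_surj {n l N : ℕ} (t : Fin l → Multiset (Fin N)) (ht : ∑ i, (t i).card = n) :
    ∃ p : (Fin n → Fin l) × (Fin n → Fin N), ∀ i, auxType p i = t i := by
  classical
  have hcard : Fintype.card (Σ i : Fin l, Fin (t i).card) = Fintype.card (Fin n) := by
    simp [ht]
  let e : Fin n ≃ (Σ i : Fin l, Fin (t i).card) := (Fintype.equivOfCardEq hcard).symm
  have hlen : ∀ i, (t i).toList.length = (t i).card := fun i => by simp
  refine ⟨(fun j => (e j).1, fun j => (t (e j).1).toList.get (Fin.cast (hlen _).symm (e j).2)), ?_⟩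
  intro i
  rw [auxType]
  have hinj : Function.Injective (fun k : Fin (t i).card => e.symm ⟨i, k⟩) := by
    intro a b h
    simpa using h
  have h1 : (Finset.univ.filter (fun j => (e j).1 = i)) =
      (Finset.univ : Finset (Fin (t i).card)).map ⟨fun k => e.symm ⟨i, k⟩, hinj⟩ := by
    ext j
    simp only [mem_filter, mem_univ, true_and, mem_map, Function.Embedding.coeFn_mk]
    constructor
    · rintro rfl
      exact ⟨(e j).2, by simp⟩
    · rintro ⟨k, rfl⟩; simp
  simp only
  rw [h1, Finset.map_val, Multiset.map_map]
  have h2 : ∀ q : (Σ i : Fin l, Fin (t i).card), ∀ k, q = ⟨i, k⟩ →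
      (t q.1).toList.get (Fin.cast (hlen _).symm q.2) =
        (t i).toList.get (Fin.cast (hlen _).symm k) := by
    rintro q k rfl; rfl
  refine (Multiset.map_congr rfl (g := fun k => (t i).toList.get (Fin.cast (hlen _).symm k))
    (fun k _ => h2 (e (e.symm ⟨i, k⟩)) k (by simp))).trans ?_
  conv_rhs => rw [← Multiset.coe_toList (t i)]
  rw [Fin.univ_val_map]
  congr 1
  apply List.ext_get
  · simp
  · intro m h h'
    simp

open Finset in
lemma aux_count {n l N : ℕ} (t : Fin l → Multiset (Fin N)) (ht : ∑ i, (t i).card = n) :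
    ∑ p : (Fin n → Fin l) × (Fin n → Fin N), (if ∀ i, auxType p i = t i then
      #{π : Equiv.Perm (Fin n) | (∀ j, p.1 (π j) = p.1 j) ∧ ∀ j, p.2 (π j) = p.2 j} else 0)
      = n.factorial := by
  classical
  obtain ⟨p₀, h₀⟩ := auxType_surj t ht
  have hn : n.factorial = #(univ : Finset (Equiv.Perm (Fin n))) := by
    rw [Finset.card_univ, Fintype.card_perm, Fintype.card_fin]
  rw [← Finset.sum_filter, hn]
  rw [Finset.card_eq_sum_card_fiberwise
    (f := fun σ : Equiv.Perm (Fin n) => (p₀.1 ∘ σ, p₀.2 ∘ σ))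
    (t := univ.filter (fun p => ∀ i, auxType p i = t i))]
  · refine Finset.sum_congr rfl fun p hp => ?_
    simp only [mem_filter, mem_univ, true_and] at hp
    obtain ⟨σ, hσ⟩ := auxType_perm p p₀ (fun i => (hp i).trans (h₀ i).symm)
    refine Finset.card_bij (fun π _ => σ * π) ?_ ?_ ?_
    · intro π hπ
      simp only [mem_filter, mem_univ, true_and] at hπ ⊢
      ext j : 2
      · simp [hσ, hπ]
      · simp [hσ, hπ]
    · intro a _ b _ h
      exact mul_left_cancel h
    · intro τ hτ
      simp only [mem_filter, mem_univ, true_and, Prod.ext_iff] at hτ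
      refine ⟨σ⁻¹ * τ, ?_, by simp⟩
      simp only [mem_filter, mem_univ, true_and]
      constructor
      · intro j
        rw [← (hσ _).1, ← hτ.1]; simp
      · intro j
        rw [← (hσ _).2, ← hτ.2]; simp
  · intro σ _
    simp only [coe_filter, mem_univ, true_and, Set.mem_ofPred_eq]
    intro i
    rw [auxType_comp, h₀]

open Finset in
/-- For a partition `λ = (λ_1,…,λ_l) ⊢ n`,
`(1/n!) ∑_{π ∈ S_n} d_λ(π) p_{λ(π)} = h_λ = ∏ᵢ h_{λᵢ}`
as symmetric polynomials in `N` variables over `ℚ`. -/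
theorem average_dPart_psum_eq_hsymm (n : ℕ) (hn : 1 ≤ n) (l : ℕ)
    (lam : Fin l → ℕ) (ha : Antitone lam) (hp : ∀ i, 0 < lam i)
    (hs : ∑ i, lam i = n) (N : ℕ) (hN : 1 ≤ N) :
    (1 / (Nat.factorial n : ℚ)) •
      ∑ π : Equiv.Perm (Fin n), (dPart lam π : ℚ) • pPerm N π
      = ∏ i, MvPolynomial.hsymm (Fin N) ℚ (lam i) := by
  classical
  have hfac : (n.factorial : ℚ) ≠ 0 := by exact_mod_cast n.factorial_ne_zero
  suffices H : ∑ π : Equiv.Perm (Fin n), (dPart lam π : ℚ) • pPerm N π =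
      (n.factorial : ℚ) • ∏ i, MvPolynomial.hsymm (Fin N) ℚ (lam i) by
    rw [H, smul_smul, one_div_mul_cancel hfac, one_smul]
  simp only [Nat.cast_smul_eq_nsmul]
  let P := (Fin n → Fin l) × (Fin n → Fin N)
  let W : P → MvPolynomial (Fin N) ℚ := fun p => ∏ j, MvPolynomial.X (p.2 j)
  let S : P → ℕ := fun p =>
    #{π : Equiv.Perm (Fin n) | (∀ j, p.1 (π j) = p.1 j) ∧ ∀ j, p.2 (π j) = p.2 j}
  have hL : ∑ π : Equiv.Perm (Fin n), dPart lam π • pPerm N π =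
      ∑ p : P, if (∀ i, #{j | p.1 j = i} = lam i) then S p • W p else 0 := by
    have h1 : ∀ π : Equiv.Perm (Fin n), dPart lam π • pPerm N π =
        ∑ p : P, if (∀ i, #{j | p.1 j = i} = lam i) then
          (if ((∀ j, p.1 (π j) = p.1 j) ∧ ∀ j, p.2 (π j) = p.2 j) then W p else 0) else 0 := by
      intro π
      rw [aux_dPart, aux_polya, ← Finset.sum_const, Finset.sum_filter, Fintype.sum_prod_type]
      refine Finset.sum_congr rfl fun g _ => ?_
      by_cases h1 : ∀ i, #{j | g j = i} = lam i
      · by_cases h2 : ∀ j, g (π j) = g j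
        · simp [h1, h2, W]
        · simp [h1, h2]
      · simp [h1]
    rw [Finset.sum_congr rfl fun π _ => h1 π, Finset.sum_comm]
    refine Finset.sum_congr rfl fun p _ => ?_
    by_cases h1 : ∀ i, #{j | p.1 j = i} = lam i
    · simp only [h1, implies_true, if_true]
      rw [← Finset.sum_filter, Finset.sum_const]
    · simp only [h1, if_false, Finset.sum_const_zero]
  rw [hL]
  simp only [MvPolynomial.hsymm]
  rw [Finset.prod_univ_sum, Fintype.piFinset_univ, Finset.smul_sum]
  have hR : ∀ t : (∀ i, Sym (Fin N) (lam i)),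
      n.factorial • ∏ i, ((t i).1.map (MvPolynomial.X (R := ℚ))).prod =
      ∑ p : P, if ∀ i, auxType p i = (t i).1 then S p • W p else 0 := by
    intro t
    rw [← aux_count (n := n) (fun i => (t i).1) (by simp [hs]), Finset.sum_smul]
    refine Finset.sum_congr rfl fun p _ => ?_
    split_ifs with h
    · congr 1
      simp only [W]
      rw [← Finset.prod_fiberwise univ p.1]
      refine Finset.prod_congr rfl fun i _ => ?_
      rw [← h i, auxType, Multiset.map_map]
      rfl
    · simp
  rw [Finset.sum_congr rfl fun t _ => hR t, Finset.sum_comm]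
  refine Finset.sum_congr rfl fun p _ => ?_
  have hcard : ∀ i, (auxType p i).card = #{j | p.1 j = i} := by
    intro i; rw [auxType, Multiset.card_map, Finset.card_val]
  split_ifs with h
  · let t₀ : ∀ i, Sym (Fin N) (lam i) := fun i => ⟨auxType p i, by rw [hcard, h]⟩
    rw [Finset.sum_eq_single t₀]
    · simp [t₀]
    · intro t _ hne
      rw [if_neg]
      intro h'
      exact hne (funext fun i => Subtype.ext (h' i).symm)
    · simp
  · symm
    refine Finset.sum_eq_zero fun t _ => ?_
    rw [if_neg]
    intro h'
    apply h
    intro i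
    rw [← hcard, h' i]
    exact (t i).2
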